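/- Let Σ = {a,b,c} and let d₁ be the DTD with rules a → ab | ca | ε, b → ε, c → ε. There is no regular language L over the alphabet of tags {a, b, c, ā, b̄, c̄} such that for every ordered unranked Σ-tree T: T satisfies d₁ if and only if str(T) ∈ L. In particular, Sat(d₁) is not of the form L^str_A for any finite string automaton A. -/

import Mathlib

/-!
Consider trees with a spine of `a`-labelled nodes in which every inner spine node may carry a
leaf `c` to the left of its spine child and a leaf `b` to the right of it. Such a tree satisfies
`d₁` iff every inner spine node carries exactly one of the two. Its tag string is an opening part,
determined by which levels carry a `c`, followed by a closing part, determined by which levels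
carry a `b`. Hence the opening part of a pattern `p`, completed by the closing part of the
complement of a pattern `q` of the same length `n`, represents a tree of `Sat(d₁)` iff `p = q`.
A language deciding this distinguishes the `2 ^ n` opening parts of length `n`, for every `n`, so
it has infinitely many left quotients and, by the Myhill–Nerode theorem, is not regular.
-/

namespace UnrankedTrees

/-! ### Unranked trees: tree domains and ordered unranked Σ-trees.
Nodes are finite strings over ℕ; a tree domain is a finite prefix-closed set
of nodes such that `s ++ [i] ∈ D` implies `s ++ [j] ∈ D` for all `j < i`. -/

abbrev Node : Type := List ℕ

/-- An ordered unranked tree over alphabet `A`: a tree domain with a labeling. -/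
structure UTree (A : Type) where
  dom : Finset Node
  nil_mem : ([] : Node) ∈ dom
  prefix_closed : ∀ ⦃s t : Node⦄, s ∈ dom → t <+: s → t ∈ dom
  sib_closed : ∀ ⦃s : Node⦄ ⦃i j : ℕ⦄, s ++ [i] ∈ dom → j < i → s ++ [j] ∈ dom
  label : Node → A

namespace UTree

variable {A : Type}

/-- The child relation `≺_ch`. -/
def childR (T : UTree A) (s t : Node) : Prop :=
  s ∈ T.dom ∧ t ∈ T.dom ∧ ∃ i : ℕ, t = s ++ [i]

/-- The descendant-or-self relation `≺*_ch` (the prefix relation). -/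
def descR (T : UTree A) (s t : Node) : Prop :=
  s ∈ T.dom ∧ t ∈ T.dom ∧ s <+: t

/-- The next-sibling relation `≺_ns`. -/
def nsR (T : UTree A) (s t : Node) : Prop :=
  s ∈ T.dom ∧ t ∈ T.dom ∧ ∃ (u : Node) (i : ℕ), s = u ++ [i] ∧ t = u ++ [i + 1]

/-- The sibling ordering `≺*_ns` (reflexive-transitive closure of next-sibling). -/
def sibR (T : UTree A) (s t : Node) : Prop :=
  s ∈ T.dom ∧ t ∈ T.dom ∧ ∃ (u : Node) (i j : ℕ), s = u ++ [i] ∧ t = u ++ [j] ∧ i ≤ j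

/-- The first-child relation `≺_fc`. -/
def firstChildR (T : UTree A) (s t : Node) : Prop :=
  s ∈ T.dom ∧ t ∈ T.dom ∧ t = s ++ [0]

/-- The number of children of a node. -/
noncomputable def childCount (T : UTree A) (s : Node) : ℕ :=
  Set.ncard {i : ℕ | s ++ [i] ∈ T.dom}

/-- The list of children of a node `s`, in sibling order: `s·0, …, s·(n-1)`. -/
noncomputable def childrenList (T : UTree A) (s : Node) : List Node :=
  (List.range (T.childCount s)).map fun i => s ++ [i]

/-- `s` is a leaf of `T`. -/
def isLeaf (T : UTree A) (s : Node) : Prop :=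
  s ∈ T.dom ∧ ∀ i : ℕ, s ++ [i] ∉ T.dom

/-- `s` has no next sibling in `T` (the root also counts as "last"). -/
def isLast (T : UTree A) (s : Node) : Prop :=
  s = [] ∨ ∃ (u : Node) (i : ℕ), s = u ++ [i] ∧ u ++ [i + 1] ∉ T.dom

end UTree

/-! ### DTDs and extended DTDs. -/

/-- A tree satisfies the DTD `d` (one rule `a → d a` per letter `a`) if at
every node labelled `a`, the string of children labels matches `d a`. -/
def SatDTD {A : Type} (T : UTree A) (d : A → RegularExpression A) : Prop :=
  ∀ s ∈ T.dom, ((T.childrenList s).map T.label) ∈ (d (T.label s)).matches'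

/-- Relabeling of a tree along `g`. -/
def UTree.relabel {B A : Type} (T : UTree B) (g : B → A) : UTree A :=
  { dom := T.dom, nil_mem := T.nil_mem, prefix_closed := T.prefix_closed,
    sib_closed := T.sib_closed, label := fun s => g (T.label s) }

/-- An extended DTD `(Σ', d', g)` over `A`: an alphabet `B ⊇ A` (witnessed by
the embedding `incl`), a DTD `d` over `B`, and a relabeling `g : B → A`. -/
structure EDTD (A : Type) where
  B : Type
  fintype_B : Fintype B
  incl : A ↪ B
  g : B → A
  d : B → RegularExpression B

/-- `T` satisfies the extended DTD `E` iff `T = g(T')` for some `B`-tree `T'`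
satisfying the DTD. -/
def EDTD.SatE {A : Type} (E : EDTD A) (T : UTree A) : Prop :=
  ∃ T' : UTree E.B, SatDTD T' E.d ∧ T = T'.relabel E.g

/-- The three-letter alphabet Σ = {a, b, c}. -/
inductive ABC : Type where
  | a : ABC
  | b : ABC
  | c : ABC
deriving DecidableEq

/-- Tags: `Sum.inl x` is the opening tag `<x>`, `Sum.inr x` the closing tag `</x>`. -/
abbrev Tag : Type := ABC ⊕ ABC

/-- `strAux T fuel s` computes the tag string of the subtree of `T` rooted at
`s`, for any sufficiently large `fuel` (larger than the remaining depth). -/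
noncomputable def strAux (T : UTree ABC) : ℕ → Node → List Tag
  | 0, _ => []
  | fuel + 1, s =>
      Sum.inl (T.label s) ::
        ((List.range (T.childCount s)).map fun i => strAux T fuel (s ++ [i])).flatten
        ++ [Sum.inr (T.label s)]

/-- The string representation `str(T)` of a tree: `str(T) = a str(T₀) ⋯ str(T_{n-1}) ā`
where `a` is the root label and `T₀, …, T_{n-1}` are the root subtrees.
(The fuel `(max length of a node) + 1` always suffices.) -/
noncomputable def strOf (T : UTree ABC) : List Tag :=
  strAux T (T.dom.sup List.length + 1) []

/-- The DTD `d₁`:  a → ab | ca | ε,  b → ε,  c → ε. -/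
def d1 : ABC → RegularExpression ABC
  | ABC.a =>
      RegularExpression.plus
        (RegularExpression.comp (RegularExpression.char ABC.a) (RegularExpression.char ABC.b))
        (RegularExpression.plus
          (RegularExpression.comp (RegularExpression.char ABC.c) (RegularExpression.char ABC.a))
          RegularExpression.epsilon)
  | ABC.b => RegularExpression.epsilon
  | ABC.c => RegularExpression.epsilon

theorem card_le_ncard_range_leftQuotient {α ι : Type*} {L : Language α} (hL : L.IsRegular)
    (u v : ι → List α) (huv : ∀ i j, u i ++ v j ∈ L ↔ i = j) :
    Nat.card ι ≤ (Set.range L.leftQuotient).ncard := by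
  have injective : Function.Injective (L.leftQuotient ∘ u) := by
    intro i j hij
    have mem_i : v j ∈ L.leftQuotient (u i) := by
      rw [show L.leftQuotient (u i) = L.leftQuotient (u j) from hij]
      exact (huv j j).2 rfl
    exact (huv i j).1 mem_i
  rw [← Set.ncard_univ, ← Set.ncard_image_of_injective _ injective, Set.image_univ]
  exact Set.ncard_le_ncard (Set.range_comp_subset_range _ _) hL.finite_range_leftQuotient

namespace UTree

variable {A : Type}

theorem lt_childCount {T : UTree A} {s : Node} {i : ℕ} : i < T.childCount s ↔ s ++ [i] ∈ T.dom := by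
  set I : Set ℕ := {j | s ++ [j] ∈ T.dom} with hI
  have finite : I.Finite :=
    T.dom.finite_toSet.preimage fun i _ j _ hij => by simpa using hij
  have lower : IsLowerSet I := fun i j hji hi =>
    hji.eq_or_lt.elim (fun h => h ▸ hi) (T.sib_closed hi)
  obtain h | ⟨n, h⟩ := lower.eq_univ_or_Iio
  · exact absurd (h ▸ finite) Set.infinite_univ
  · have card : T.childCount s = n := by
      rw [childCount, ← hI, h, ← Finset.coe_Iio, Set.ncard_coe_finset, Nat.card_Iio]
    rw [card, ← Set.mem_Iio, ← h]
    rfl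

/-- The length of the longest node of a tree. -/
def height (T : UTree A) : ℕ :=
  T.dom.sup List.length

theorem length_le_height {T : UTree A} {s : Node} (hs : s ∈ T.dom) : s.length ≤ T.height :=
  Finset.le_sup (f := List.length) hs

theorem strAux_eq_strAux {T : UTree ABC} {k m : ℕ} {s : Node} (hs : s ∈ T.dom)
    (hk : T.height < s.length + k) (hm : T.height < s.length + m) :
    strAux T k s = strAux T m s := by
  induction k generalizing m s with
  | zero => exact absurd (length_le_height hs) (by omega)
  | succ k ih =>
    cases m with
    | zero => exact absurd (length_le_height hs) (by omega)
    | succ m =>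
      have children : (List.range (T.childCount s)).map (fun i => strAux T k (s ++ [i])) =
          (List.range (T.childCount s)).map fun i => strAux T m (s ++ [i]) :=
        List.map_congr_left fun i hi => ih (lt_childCount.1 (List.mem_range.1 hi))
          (by simp only [List.length_append, List.length_singleton]; omega)
          (by simp only [List.length_append, List.length_singleton]; omega)
      rw [strAux, strAux, children]

theorem strAux_eq_strOf {T : UTree ABC} {k : ℕ} (hk : T.height < k) : strAux T k [] = strOf T :=
  strAux_eq_strAux T.nil_mem (by simpa using hk) (by simp [height])

/-! ### Grafting trees under a new root -/

/-- The tree with root label `x` and immediate subtrees `ts`, in this order. At `i :: s`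
with `ts.length ≤ i`, outside the domain, the label takes the arbitrary value `x`. -/
def node (x : A) (ts : List (UTree A)) : UTree A where
  dom := insert [] (Finset.univ.biUnion fun i : Fin ts.length => ts[i].dom.image (List.cons ↑i))
  nil_mem := Finset.mem_insert_self _ _
  prefix_closed := by
    rintro s (_ | ⟨i, t⟩) hs ⟨r, rfl⟩
    · exact Finset.mem_insert_self _ _
    · obtain ⟨i, hi, rfl⟩ : ∃ j : Fin ts.length, t ++ r ∈ ts[j].dom ∧ ↑j = i := by simpa using hs
      simpa using ⟨i, ts[i].prefix_closed hi (List.prefix_append _ _), rfl⟩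
  sib_closed := by
    rintro (_ | ⟨k, s⟩) i j hs hj
    · obtain ⟨l, hl, rfl⟩ : ∃ l : Fin ts.length, [] ∈ ts[l].dom ∧ ↑l = i := by simpa using hs
      simpa using ⟨⟨j, hj.trans l.isLt⟩, UTree.nil_mem _, rfl⟩
    · obtain ⟨l, hl, rfl⟩ : ∃ l : Fin ts.length, s ++ [i] ∈ ts[l].dom ∧ ↑l = k := by
        simpa using hs
      simpa using ⟨l, ts[l].sib_closed hl hj, rfl⟩
  label
    | [] => x
    | i :: s => ts[i]?.elim x fun t => t.label s

section Node

variable {x : A} {ts : List (UTree A)}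

theorem label_node_nil : (node x ts).label [] = x :=
  rfl

theorem label_node_cons {i : ℕ} (hi : i < ts.length) (s : Node) :
    (node x ts).label (i :: s) = ts[i].label s := by
  simp [node, hi]

theorem cons_mem_node {i : ℕ} {s : Node} :
    i :: s ∈ (node x ts).dom ↔ ∃ hi : i < ts.length, s ∈ ts[i].dom := by
  simp [node, Fin.exists_iff]

theorem childCount_node_nil : (node x ts).childCount [] = ts.length :=
  eq_of_forall_lt_iff fun i => by
    rw [lt_childCount, List.nil_append, cons_mem_node]
    exact ⟨fun ⟨hi, _⟩ => hi, fun hi => ⟨hi, ts[i].nil_mem⟩⟩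

theorem childCount_node_cons {i : ℕ} (hi : i < ts.length) (s : Node) :
    (node x ts).childCount (i :: s) = ts[i].childCount s :=
  eq_of_forall_lt_iff fun j => by
    simp [lt_childCount, cons_mem_node, hi]

theorem height_getElem_lt_height_node {i : ℕ} (hi : i < ts.length) :
    ts[i].height < (node x ts).height := by
  obtain ⟨s, hs, hmax⟩ := Finset.exists_mem_eq_sup ts[i].dom ⟨[], ts[i].nil_mem⟩ List.length
  calc ts[i].height = s.length := hmax
    _ < (i :: s).length := by simp
    _ ≤ (node x ts).height := length_le_height (cons_mem_node.2 ⟨hi, hs⟩)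

theorem map_label_childrenList_node_nil :
    ((node x ts).childrenList []).map (node x ts).label = ts.map (·.label []) :=
  List.ext_getElem (by simp [childrenList, childCount_node_nil]) fun i _ hi => by
    simp only [List.length_map] at hi
    simp [childrenList, label_node_cons hi]

theorem map_label_childrenList_node_cons {i : ℕ} (hi : i < ts.length) (s : Node) :
    ((node x ts).childrenList (i :: s)).map (node x ts).label =
      (ts[i].childrenList s).map ts[i].label := by
  simp [childrenList, childCount_node_cons hi, label_node_cons hi]

theorem satDTD_node {d : A → RegularExpression A} :
    SatDTD (node x ts) d ↔
      ts.map (·.label []) ∈ (d x).matches' ∧ ∀ t ∈ ts, SatDTD t d := by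
  constructor
  · intro h
    refine ⟨map_label_childrenList_node_nil ▸ h [] (node x ts).nil_mem,
      List.forall_mem_iff_getElem.2 fun i hi s hs => ?_⟩
    simpa only [map_label_childrenList_node_cons hi, label_node_cons hi] using
      h (i :: s) (cons_mem_node.2 ⟨hi, hs⟩)
  · rintro ⟨root, subtrees⟩ (_ | ⟨i, s⟩) hs
    · rwa [map_label_childrenList_node_nil, label_node_nil]
    · obtain ⟨hi, hs⟩ := cons_mem_node.1 hs
      rw [map_label_childrenList_node_cons hi, label_node_cons hi]
      exact subtrees _ (List.getElem_mem hi) s hs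

end Node

theorem strAux_node_cons {x : ABC} {ts : List (UTree ABC)} {i : ℕ} (hi : i < ts.length) (k : ℕ)
    (s : Node) : strAux (node x ts) k (i :: s) = strAux ts[i] k s := by
  induction k generalizing s with
  | zero => rfl
  | succ k ih =>
    simp only [strAux, label_node_cons hi, childCount_node_cons hi, List.cons_append, ih]

theorem strOf_node (x : ABC) (ts : List (UTree ABC)) :
    strOf (node x ts) = Sum.inl x :: ts.flatMap strOf ++ [Sum.inr x] := by
  have subtree : ∀ i (hi : i < ts.length),
      strAux (node x ts) (node x ts).height [i] = strOf ts[i] := fun i hi => by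
    rw [strAux_node_cons hi, strAux_eq_strOf (height_getElem_lt_height_node hi)]
  have subtrees : (List.range ts.length).map
      (fun i => strAux (node x ts) (node x ts).height [i]) = ts.map strOf :=
    List.ext_getElem (by simp) fun i _ hi => by
      simp only [List.length_map] at hi
      simp [subtree i hi]
  rw [← strAux_eq_strOf (Nat.lt_succ_self _), strAux, childCount_node_nil, label_node_nil,
    List.flatMap_def, ← subtrees]
  simp only [List.nil_append]

/-- The single-node tree labelled `x`. -/
def leaf (x : A) : UTree A :=
  node x []

/-! ### Spines -/

/-- The tree whose spine of `a`-labelled nodes has one inner node for each entry `(p, q)` of the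
list, from the root down: the node has a leaf `c` to the left of its spine child iff `p`, and a
leaf `b` to the right of it iff `q`. -/
def spine : List (Bool × Bool) → UTree ABC
  | [] => leaf ABC.a
  | (p, q) :: l =>
    node ABC.a ((if p then [leaf ABC.c] else []) ++ spine l :: (if q then [leaf ABC.b] else []))

theorem label_leaf_nil (x : A) : (leaf x).label [] = x :=
  rfl

theorem label_spine_nil (l : List (Bool × Bool)) : (spine l).label [] = ABC.a := by
  cases l <;> rfl

end UTree

section Spine

open UTree

/-- The tags of a spine up to and including those of its bottom node; an entry of the list tells
whether the inner spine node at that level has a leaf `c`. -/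
def opening : List Bool → List Tag
  | [] => [Sum.inl ABC.a, Sum.inr ABC.a]
  | p :: l => Sum.inl ABC.a :: (if p then [Sum.inl ABC.c, Sum.inr ABC.c] else []) ++ opening l

/-- The tags of a spine after those of its bottom node; an entry of the list tells whether the
inner spine node at that level has a leaf `b`. -/
def closing : List Bool → List Tag
  | [] => []
  | q :: l => closing l ++ (if q then [Sum.inl ABC.b, Sum.inr ABC.b] else []) ++ [Sum.inr ABC.a]

theorem strOf_leaf (x : ABC) : strOf (leaf x) = [Sum.inl x, Sum.inr x] :=
  strOf_node x []

theorem strOf_spine (l : List (Bool × Bool)) :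
    strOf (spine l) = opening (l.map Prod.fst) ++ closing (l.map Prod.snd) := by
  induction l with
  | nil => exact strOf_leaf ABC.a
  | cons pq l ih =>
    obtain ⟨p, q⟩ := pq
    cases p <;> cases q <;> simp [spine, opening, closing, strOf_node, strOf_leaf, ih]

theorem mem_matches_d1_a {w : List ABC} :
    w ∈ (d1 ABC.a).matches' ↔ w = [ABC.a, ABC.b] ∨ w = [ABC.c, ABC.a] ∨ w = [] := by
  have mem_singleton : ∀ u v : List ABC, u ∈ ({v} : Language ABC) ↔ u = v := fun _ _ => Iff.rfl
  simp [d1, Language.mem_add, Language.mem_mul, Language.mem_one, mem_singleton, eq_comm]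

theorem satDTD_leaf_d1 (x : ABC) : SatDTD (leaf x) d1 := by
  cases x <;> simp [leaf, satDTD_node, d1, Language.mem_add, Language.mem_one]

theorem satDTD_spine_d1 (l : List (Bool × Bool)) :
    SatDTD (spine l) d1 ↔ ∀ pq ∈ l, pq.1 ≠ pq.2 := by
  induction l with
  | nil => simp [spine, satDTD_leaf_d1]
  | cons pq l ih =>
    obtain ⟨p, q⟩ := pq
    cases p <;> cases q <;>
      simp [spine, satDTD_node, mem_matches_d1_a, label_spine_nil, label_leaf_nil,
        satDTD_leaf_d1, ih]

theorem opening_append_closing_compl_mem_iff {L : Language Tag}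
    (hL : ∀ T : UTree ABC, SatDTD T d1 ↔ strOf T ∈ L) {n : ℕ} (p q : Fin n → Bool) :
    opening (List.ofFn p) ++ closing (List.ofFn fun i => !q i) ∈ L ↔ p = q := by
  have h := hL (spine (List.ofFn fun i => (p i, !q i)))
  rw [strOf_spine, List.map_ofFn, List.map_ofFn, satDTD_spine_d1] at h
  simpa [Function.comp_def, funext_iff] using h.symm

end Spine

/-- There is no regular language `L` over the tag alphabet
such that a tree satisfies `d₁` iff its string representation lies in `L`;
in particular `Sat(d₁)` is not of the form `L^str_A` for a finite string
automaton `A`. -/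
theorem no_streaming_automaton_for_d1 :
    ¬ ∃ L : Language Tag, L.IsRegular ∧
        ∀ T : UTree ABC, SatDTD T d1 ↔ strOf T ∈ L := by
  rintro ⟨L, hreg, hL⟩
  set n := (Set.range L.leftQuotient).ncard
  have patterns_le : Nat.card (Fin n → Bool) ≤ n :=
    card_le_ncard_range_leftQuotient hreg (fun p => opening (List.ofFn p))
      (fun q => closing (List.ofFn fun i => !q i)) (opening_append_closing_compl_mem_iff hL)
  have card_patterns : Nat.card (Fin n → Bool) = 2 ^ n := by simp
  exact (card_patterns ▸ patterns_le).not_gt Nat.lt_two_pow_self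

end UnrankedTrees
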